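/- Let d = 2 and r > 0. Identify (v, U) ∈ ℝ² × S₀^{2×2} with (z, ζ) ∈ ℂ × ℂ via z = v₁ + i v₂ and ζ = U₁₁ + i U₁₂. Define f_r(a + ib, c) := √r·|a|/(r/2 + c) + √r·|b|/(r/2 − c) for a, b ∈ ℝ and |c| < r/2, and 𝒱_r := {(z e^{iθ}, c e^{2iθ}) ∈ ℂ × ℂ : z ∈ ℂ, c ∈ ℝ, f_r(z, c) < 1, 0 < |c| < r/2, θ ∈ ℝ}. Let 𝒱_r^lc := ∪_{i≥0} 𝒱^{(i)} be the lamination convex hull of 𝒱_r with respect to Λ, where 𝒱^{(0)} = 𝒱_r and 𝒱^{(i+1)} := 𝒱^{(i)} ∪ {tξ + (1−t)ξ' : ξ, ξ' ∈ 𝒱^{(i)}, ξ − ξ' ∈ Λ, t ∈ [0,1]}, with Λ = {(z, ζ) ∈ (ℂ∖{0}) × ℂ : Im(z²·conj(ζ)) = 0} the wave cone in complex coordinates. Then the zero state (0, 0) belongs to 𝒱_r^lc. -/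

import Mathlib

noncomputable section

/-- The function `f_r(a + ib, c) = √r·|a|/(r/2 + c) + √r·|b|/(r/2 − c)`. -/
def fr (r : ℝ) (z : ℂ) (c : ℝ) : ℝ :=
  Real.sqrt r * |z.re| / (r / 2 + c) + Real.sqrt r * |z.im| / (r / 2 - c)

/-- The set `𝒱_r = {(z e^{iθ}, c e^{2iθ}) : f_r(z, c) < 1, 0 < |c| < r/2, θ ∈ ℝ}`
in the complex coordinates `(z, ζ) ∈ ℂ × ℂ`. -/
def Vset (r : ℝ) : Set (ℂ × ℂ) :=
  {p | ∃ (z : ℂ) (c θ : ℝ), fr r z c < 1 ∧ 0 < |c| ∧ |c| < r / 2 ∧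
    p = (z * Complex.exp (θ * Complex.I), (c : ℂ) * Complex.exp (2 * θ * Complex.I))}

/-- The wave cone in complex coordinates: `Λ = {(z, ζ) : z ≠ 0, Im(z²·conj ζ) = 0}`. -/
def cLam : Set (ℂ × ℂ) := {p | p.1 ≠ 0 ∧ (p.1 ^ 2 * (starRingEnd ℂ) p.2).im = 0}

/-- The iterates `𝒰^{(i)}` of the lamination convex hull construction with respect to a
cone `L`: `𝒰^{(0)} = S` and
`𝒰^{(i+1)} = 𝒰^{(i)} ∪ {tξ + (1−t)ξ' : ξ, ξ' ∈ 𝒰^{(i)}, ξ − ξ' ∈ L, t ∈ [0,1]}`. -/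
def lamIter (L S : Set (ℂ × ℂ)) : ℕ → Set (ℂ × ℂ)
  | 0 => S
  | (i + 1) => lamIter L S i ∪
      {p | ∃ ξ ξ' : ℂ × ℂ, ∃ t : ℝ, ξ ∈ lamIter L S i ∧ ξ' ∈ lamIter L S i ∧
        ξ - ξ' ∈ L ∧ t ∈ Set.Icc (0 : ℝ) 1 ∧ p = t • ξ + (1 - t) • ξ'}

/-- The lamination convex hull `S^lc = ∪_i 𝒰^{(i)}` with respect to the cone `L`. -/
def lamHull (L S : Set (ℂ × ℂ)) : Set (ℂ × ℂ) := ⋃ i, lamIter L S i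

section LaminationHull

variable {L S : Set (ℂ × ℂ)}

theorem lamIter_mono (L S : Set (ℂ × ℂ)) : Monotone (lamIter L S) :=
  monotone_nat_of_le_succ fun _ => Set.subset_union_left

theorem subset_lamHull (L S : Set (ℂ × ℂ)) : S ⊆ lamHull L S :=
  Set.subset_iUnion (lamIter L S) 0

theorem smul_add_smul_mem_lamHull {p q : ℂ × ℂ} {t : ℝ} (hp : p ∈ lamHull L S)
    (hq : q ∈ lamHull L S) (hpq : p - q ∈ L) (ht : t ∈ Set.Icc (0 : ℝ) 1) :
    t • p + (1 - t) • q ∈ lamHull L S := by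
  obtain ⟨i, hp⟩ := Set.mem_iUnion.mp hp
  obtain ⟨j, hq⟩ := Set.mem_iUnion.mp hq
  have hp' : p ∈ lamIter L S (max i j) := lamIter_mono L S (le_max_left i j) hp
  have hq' : q ∈ lamIter L S (max i j) := lamIter_mono L S (le_max_right i j) hq
  exact Set.mem_iUnion.mpr ⟨max i j + 1, Or.inr ⟨p, q, t, hp', hq', hpq, ht, rfl⟩⟩

theorem zero_mem_lamHull_of_neg_mem {p : ℂ × ℂ} (hp : p ∈ lamHull L S)
    (hnp : -p ∈ lamHull L S) (hL : (2 : ℝ) • p ∈ L) : 0 ∈ lamHull L S := by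
  have hdiff : p - -p ∈ L := by rwa [sub_neg_eq_add, ← two_smul ℝ]
  have hmid : (1 / 2 : ℝ) • p + (1 - 1 / 2 : ℝ) • -p = 0 := by module
  exact hmid ▸ smul_add_smul_mem_lamHull hp hnp hdiff ⟨by norm_num, by norm_num⟩

end LaminationHull

section WaveCone

theorem smul_mem_cLam {p : ℂ × ℂ} {t : ℝ} (ht : t ≠ 0) (hp : p ∈ cLam) : t • p ∈ cLam := by
  refine ⟨smul_ne_zero ht hp.1, ?_⟩
  have hscale : (t • p).1 ^ 2 * (starRingEnd ℂ) (t • p).2 =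
      ((t ^ 3 : ℝ) : ℂ) * (p.1 ^ 2 * (starRingEnd ℂ) p.2) := by
    simp only [Prod.smul_fst, Prod.smul_snd, Complex.real_smul, map_mul, Complex.conj_ofReal,
      Complex.ofReal_pow]
    ring
  rw [hscale, Complex.im_ofReal_mul, hp.2, mul_zero]

theorem ofReal_mem_cLam {x : ℝ} (c : ℝ) (hx : x ≠ 0) : ((x : ℂ), (c : ℂ)) ∈ cLam := by
  refine ⟨Complex.ofReal_ne_zero.mpr hx, ?_⟩
  simp only [Complex.conj_ofReal, ← Complex.ofReal_pow, ← Complex.ofReal_mul, Complex.ofReal_im]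

end WaveCone

section Vset

variable {r c : ℝ} {z : ℂ}

-- `fr` is not even in `c`; this upper bound is, so it controls `(z, c)` and `(-z, -c)` at once.
theorem fr_le (z : ℂ) (hc : |c| < r / 2) :
    fr r z c ≤ √r * (|z.re| + |z.im|) / (r / 2 - |c|) := by
  have : 0 < r / 2 - |c| := sub_pos.mpr hc
  have hadd : r / 2 - |c| ≤ r / 2 + c := by linarith [neg_abs_le c]
  have hsub : r / 2 - |c| ≤ r / 2 - c := by linarith [le_abs_self c]
  calc fr r z c
      ≤ √r * |z.re| / (r / 2 - |c|) + √r * |z.im| / (r / 2 - |c|) := by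
        unfold fr
        gcongr
    _ = √r * (|z.re| + |z.im|) / (r / 2 - |c|) := by rw [← add_div, mul_add]

theorem mem_Vset_of_fr_lt_one (hfr : fr r z c < 1) (hc : c ≠ 0) (hcr : |c| < r / 2) :
    (z, (c : ℂ)) ∈ Vset r :=
  ⟨z, c, 0, hfr, abs_pos.mpr hc, hcr, by simp⟩

theorem mem_Vset_of_add_abs_lt (hc : c ≠ 0) (h : √r * (|z.re| + |z.im|) + |c| < r / 2) :
    (z, (c : ℂ)) ∈ Vset r := by
  have hnonneg : 0 ≤ √r * (|z.re| + |z.im|) := by positivity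
  have hcr : |c| < r / 2 := by linarith
  refine mem_Vset_of_fr_lt_one ((fr_le z hcr).trans_lt ?_) hc hcr
  exact (div_lt_one (sub_pos.mpr hcr)).mpr (lt_sub_iff_add_lt.mpr h)

theorem neg_mem_Vset_of_add_abs_lt (hc : c ≠ 0) (h : √r * (|z.re| + |z.im|) + |c| < r / 2) :
    -(z, (c : ℂ)) ∈ Vset r := by
  rw [Prod.neg_mk, ← Complex.ofReal_neg]
  exact mem_Vset_of_add_abs_lt (neg_ne_zero.mpr hc) (by simpa using h)

end Vset

/-- Let `d = 2` and `r > 0`. The zero state `(0,0)` belongs to the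
lamination convex hull (with respect to the wave cone `Λ` in complex coordinates) of the
set `𝒱_r`. -/
theorem stmt16 (r : ℝ) (hr : 0 < r) :
    ((0, 0) : ℂ × ℂ) ∈ lamHull cLam (Vset r) := by
  have hx : √r / 8 ≠ 0 := by positivity
  have hc : r / 4 ≠ 0 := by positivity
  set p : ℂ × ℂ := ((√r / 8 : ℝ), (r / 4 : ℝ))
  have hbound : √r * (|((√r / 8 : ℝ) : ℂ).re| + |((√r / 8 : ℝ) : ℂ).im|) + |r / 4| < r / 2 := by
    rw [Complex.ofReal_re, Complex.ofReal_im, abs_zero, add_zero, abs_of_pos (by positivity),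
      abs_of_pos (by positivity)]
    linarith [Real.mul_self_sqrt hr.le]
  have hp : p ∈ Vset r := mem_Vset_of_add_abs_lt hc hbound
  have hnp : -p ∈ Vset r := neg_mem_Vset_of_add_abs_lt hc hbound
  have hcone : (2 : ℝ) • p ∈ cLam := smul_mem_cLam two_ne_zero (ofReal_mem_cLam _ hx)
  exact zero_mem_lamHull_of_neg_mem (subset_lamHull _ _ hp) (subset_lamHull _ _ hnp) hcone
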